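/- Let N > 2 and let θ = (θ_1, …, θ_N) be a global classical solution of the delayed Kuramoto system satisfying (H1)–(H3). Then at the initial time the phase diameter strictly decreases: D⁺ D(θ(t))|_{t=0} ≤ D(Ω) − 2κ ((N−2)/N) sin(D_{θ0}/2) cos(D_{θ0}/2 + R_ω τ) < 0, where D⁺ denotes the upper Dini derivative. -/

import Mathlib

/-!
The diameter `D(θ(s))` is the maximum of the finitely many functions `θ i s - θ j s`, so its upper
Dini derivative at `0` is at most the largest derivative `θ i' 0 - θ j' 0` over the pairs `(i, j)`
attaining the maximum at `0` (`eventually_pair_le`). For such a pair, `θ i 0` is the largest and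
`θ j 0` the smallest phase. Delayed phases differ from the current ones by at most `Rω τ`
(`delay_le`), so in the difference of the two coupling sums

* every `k ≠ i, j` contributes
  `sin (a - x) - sin (a - y) = -2 sin (D/2) cos (a - (x + y)/2) ≤ -2 sin (D/2) cos (D/2 + Rω τ)`;
* the two remaining terms `k = j` and `k = i` are sines of angles in `[-π, 0]` and `[0, π]`, with
  signs that only help, because `π/2 < D - Rω τ` and `D + Rω τ < π`

(`coupling_diff_le`). The differential equation holds at `t = 0` by continuity. Negativity of the
bound is the assumption on `κ` together with `D/2 + Rω τ ≤ (D + δ)/2 < π/2`.-/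

open Real Filter Set

/-- Upper Dini derivative. -/
noncomputable def diniUpper (f : ℝ → ℝ) (t : ℝ) : ℝ :=
  Filter.limsup (fun h => (f (t + h) - f t) / h) (nhdsWithin 0 (Set.Ioi 0))

/-- A phase moves by at most `R τ` during the delay. -/
lemma delay_le {f : ℝ → ℝ} (hf : ContDiff ℝ 1 f) {τ R : ℝ} (hτ : 0 ≤ τ)
    (hR : ∀ t, -τ ≤ t → |deriv f t| ≤ R) : |f (-τ) - f 0| ≤ R * τ := by
  have h := Convex.norm_image_sub_le_of_norm_deriv_le (f := f) (s := Icc (-τ) 0) (C := R)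
    (x := 0) (y := -τ) (fun x _ => (hf.differentiable (by norm_num)) x)
    (fun x hx => hR x hx.1) (convex_Icc _ _) ⟨by linarith, le_refl _⟩ ⟨le_refl _, by linarith⟩
  simpa [abs_of_nonneg hτ] using h

/-- Contribution of an oscillator with delayed phase `a` and current phase `b ∈ [y, x]` to the
difference of the coupling sums of the extremal phases `x` and `y`. -/
lemma sin_sub_sin_le {a b x y r : ℝ} (hab : |a - b| ≤ r) (hyb : y ≤ b) (hbx : b ≤ x)
    (hr : (x - y) / 2 + r ≤ π / 2) :
    sin (a - x) - sin (a - y) ≤ -(2 * sin ((x - y) / 2) * cos ((x - y) / 2 + r)) := by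
  have hpi := pi_pos
  have hab' := abs_le.1 hab
  have e : sin (a - x) - sin (a - y) = -(2 * sin ((x - y) / 2) * cos (a - (x + y) / 2)) := by
    rw [Real.sin_sub_sin, show (a - x - (a - y)) / 2 = -((x - y) / 2) by ring,
      show (a - x + (a - y)) / 2 = a - (x + y) / 2 by ring, sin_neg]
    ring
  have hs : 0 ≤ sin ((x - y) / 2) :=
    sin_nonneg_of_nonneg_of_le_pi (by linarith) (by linarith [abs_nonneg (a - b)])
  have hc : cos ((x - y) / 2 + r) ≤ cos (a - (x + y) / 2) := by
    rw [← cos_abs (a - (x + y) / 2)]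
    refine cos_le_cos_of_nonneg_of_le_pi (abs_nonneg _) (by linarith) ?_
    rw [abs_le]
    constructor <;> linarith
  rw [e]
  nlinarith [mul_le_mul_of_nonneg_left hc hs]

/-- Difference of the coupling sums of an oscillator `i` with maximal phase and an oscillator `j`
with minimal phase; `a` is the delayed and `b` the current phase configuration. -/
lemma coupling_diff_le {N : ℕ} {a b : Fin N → ℝ} {r : ℝ} (i j : Fin N) (hij : i ≠ j)
    (hab : ∀ k, |a k - b k| ≤ r) (hj : ∀ k, b j ≤ b k) (hi : ∀ k, b k ≤ b i)
    (h1 : 0 ≤ b i - b j - r) (h2 : (b i - b j) + r ≤ π) (h3 : (b i - b j) / 2 + r ≤ π / 2) :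
    (∑ k ∈ Finset.univ.erase i, sin (a k - b i)) - ∑ k ∈ Finset.univ.erase j, sin (a k - b j) ≤
      -(((N : ℝ) - 2) * (2 * sin ((b i - b j) / 2) * cos ((b i - b j) / 2 + r))) := by
  have hji : j ∈ Finset.univ.erase i := by simp [hij.symm]
  have hij' : i ∈ Finset.univ.erase j := by simp [hij]
  rw [← Finset.add_sum_erase _ _ hji, ← Finset.add_sum_erase _ _ hij',
    Finset.erase_right_comm (a := j) (b := i)]
  have hcard : ((((Finset.univ.erase i).erase j).card : ℕ) : ℝ) = (N : ℝ) - 2 := by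
    rw [Finset.card_erase_of_mem hji, Finset.card_erase_of_mem (Finset.mem_univ _),
      Finset.card_univ, Fintype.card_fin]
    have hN : 2 ≤ N := by
      have := i.2; have := j.2
      have : (i : ℕ) ≠ j := fun h => hij (Fin.ext h)
      omega
    rw [show N - 1 - 1 = N - 2 by omega, Nat.cast_sub hN]
    norm_num
  have hsum := Finset.sum_le_card_nsmul ((Finset.univ.erase i).erase j)
    (fun k => sin (a k - b i) - sin (a k - b j)) _
    (fun k _ => sin_sub_sin_le (hab k) (hj k) (hi k) h3)
  rw [Finset.sum_sub_distrib, nsmul_eq_mul, hcard] at hsum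
  have haj := abs_le.1 (hab j)
  have hai := abs_le.1 (hab i)
  have s1 : sin (a j - b i) ≤ 0 :=
    sin_nonpos_of_nonpos_of_neg_pi_le (by linarith) (by linarith)
  have s2 : 0 ≤ sin (a i - b j) :=
    sin_nonneg_of_nonneg_of_le_pi (by linarith) (by linarith)
  linarith

/-- One-sided first-order bound: a function starting at or below `D` stays below `D + C h` for small
`h > 0`, provided its derivative is less than `C` in case it starts exactly at `D`. -/
lemma eventually_pair_le {f : ℝ → ℝ} {f' D C : ℝ} (hf : HasDerivAt f f' 0) (h0 : f 0 ≤ D)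
    (hC : f 0 = D → f' < C) : ∀ᶠ h in nhdsWithin 0 (Ioi 0), f h ≤ D + C * h := by
  rcases h0.lt_or_eq with hlt | heq
  · have hc : ContinuousAt (fun h => D + C * h) 0 := by fun_prop
    have := hf.continuousAt.eventually_lt hc (by simpa using hlt)
    exact (this.filter_mono nhdsWithin_le_nhds).mono fun h hh => hh.le
  · have ht := hf.tendsto_slope_zero_right
    filter_upwards [ht.eventually_lt_const (hC heq), self_mem_nhdsWithin] with h hh hpos
    have hpos' : 0 < h := hpos
    simp only [zero_add, smul_eq_mul] at hh
    rw [inv_mul_lt_iff₀ hpos'] at hh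
    linarith

lemma abs_sub_le_diam {N : ℕ} (v : Fin N → ℝ) (i j : Fin N) :
    |v i - v j| ≤ ⨆ i, ⨆ j, |v i - v j| :=
  (le_ciSup (f := fun j => |v i - v j|) (Set.finite_range _).bddAbove j).trans
    (le_ciSup (f := fun i => ⨆ j, |v i - v j|) (Set.finite_range _).bddAbove i)

lemma exists_sub_eq_diam {N : ℕ} [Nonempty (Fin N)] (v : Fin N → ℝ) :
    ∃ i j, v i - v j = ⨆ i, ⨆ j, |v i - v j| := by
  obtain ⟨i, hi⟩ := exists_eq_ciSup_of_finite (f := fun i => ⨆ j, |v i - v j|)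
  obtain ⟨j, hj⟩ := exists_eq_ciSup_of_finite (f := fun j => |v i - v j|)
  rw [← hi, ← hj]
  rcases abs_choice (v i - v j) with h | h
  · exact ⟨i, j, h.symm⟩
  · exact ⟨j, i, by rw [h]; ring⟩

/-- Envelope estimate for the upper Dini derivative of the diameter. -/
lemma diniUpper_diam_le {N : ℕ} [Nonempty (Fin N)] {θ : Fin N → ℝ → ℝ}
    (hd : ∀ i, DifferentiableAt ℝ (θ i) 0) {B : ℝ}
    (hB : ∀ i j, θ i 0 - θ j 0 = (⨆ i, ⨆ j, |θ i 0 - θ j 0|) →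
      deriv (θ i) 0 - deriv (θ j) 0 ≤ B) :
    diniUpper (fun s => ⨆ i, ⨆ j, |θ i s - θ j s|) 0 ≤ B := by
  have hdd : ∀ i j, HasDerivAt (fun s => θ i s - θ j s) (deriv (θ i) 0 - deriv (θ j) 0) 0 :=
    fun i j => (hd i).hasDerivAt.sub (hd j).hasDerivAt
  unfold diniUpper
  refine le_of_forall_pos_le_add fun ε hε => ?_
  refine limsup_le_of_le ?_ ?_
  · -- On the reals the `limsup` is a junk value unless the quotients are bounded below; comparison
    -- with a pair that is extremal at `0` gives this bound.
    obtain ⟨i, j, hij⟩ := exists_sub_eq_diam (fun i => θ i 0)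
    have ht := (hdd i j).tendsto_slope_zero_right
    refine IsBoundedUnder.isCoboundedUnder_le (ht.isBoundedUnder_ge.mono_ge ?_)
    filter_upwards [self_mem_nhdsWithin] with h hpos
    have hpos' : 0 < h := hpos
    simp only [zero_add, smul_eq_mul]
    rw [inv_mul_eq_div, hij]
    have := (le_abs_self _).trans (abs_sub_le_diam (fun i => θ i h) i j)
    gcongr
  · have key : ∀ᶠ h in nhdsWithin (0 : ℝ) (Ioi 0), ∀ i j,
        θ i h - θ j h ≤ (⨆ i, ⨆ j, |θ i 0 - θ j 0|) + (B + ε) * h := by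
      refine eventually_all.2 fun i => eventually_all.2 fun j => ?_
      exact eventually_pair_le (hdd i j)
        ((le_abs_self _).trans (abs_sub_le_diam (fun i => θ i 0) i j))
        (fun h => by linarith [hB i j h])
    filter_upwards [key, self_mem_nhdsWithin] with h hk hpos
    have hpos' : 0 < h := hpos
    simp only [zero_add]
    rw [div_le_iff₀ hpos', sub_le_iff_le_add']
    refine ciSup_le fun i => ciSup_le fun j => abs_le.2 ⟨?_, hk i j⟩
    linarith [hk j i]

/-- Under (H1)-(H3), the phase diameter strictly decreases at the
initial time: its upper Dini derivative at `t = 0` is bounded by a strictly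
negative quantity. -/
theorem delayed_kuramoto_diameter_decreases_initially
    {N : ℕ} (hN : 2 < N)
    (θ : Fin N → ℝ → ℝ) (Ω : Fin N → ℝ) (κ τ δ Rω : ℝ)
    (Dθ0 DΩ Dstar : ℝ)
    (hκ : 0 < κ) (hτ : 0 ≤ τ)
    (hC1 : ∀ i, ContDiff ℝ 1 (θ i))
    (hODE : ∀ i, ∀ t : ℝ, 0 < t →
      deriv (θ i) t = Ω i + (κ / (N : ℝ)) *
        ∑ k ∈ Finset.univ.erase i, Real.sin (θ k (t - τ) - θ i t))
    (hRω : IsLUB {x : ℝ | ∃ t : ℝ, -τ ≤ t ∧ ∃ i, x = |deriv (θ i) t|} Rω)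
    (hDθ0 : Dθ0 = ⨆ i, ⨆ j, |θ i 0 - θ j 0|)
    (hDΩ : DΩ = ⨆ i, ⨆ j, |Ω i - Ω j|)
    (hDstar : Dstar = π - Dθ0)
    (hδ : 0 < δ) (hδ' : δ < π / 2)
    (hH1 : π / 2 < Dθ0 ∧ Dθ0 < π - δ)
    (hH2 : κ > ((N : ℝ) / ((N : ℝ) - 2)) * DΩ /
      (2 * Real.sin (Dθ0 / 2) * Real.cos ((Dθ0 + δ) / 2)))
    (hH3 : τ < min (δ / (2 * Rω)) ((π / 2 - Dstar) / Rω)) :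
    diniUpper (fun s => ⨆ i, ⨆ j, |θ i s - θ j s|) 0 ≤
      DΩ - 2 * κ * (((N : ℝ) - 2) / (N : ℝ)) *
        Real.sin (Dθ0 / 2) * Real.cos (Dθ0 / 2 + Rω * τ) ∧
    DΩ - 2 * κ * (((N : ℝ) - 2) / (N : ℝ)) *
      Real.sin (Dθ0 / 2) * Real.cos (Dθ0 / 2 + Rω * τ) < 0 := by
  obtain ⟨hD1, hD2⟩ := hH1
  have hpi := pi_pos
  have hN' : (2 : ℝ) < N := by exact_mod_cast hN
  haveI : Nonempty (Fin N) := ⟨⟨0, by omega⟩⟩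
  have hderiv : ∀ i, ∀ t : ℝ, -τ ≤ t → |deriv (θ i) t| ≤ Rω :=
    fun i t ht => hRω.1 ⟨t, ht, i, rfl⟩
  have hR0 : 0 ≤ Rω := (abs_nonneg _).trans (hderiv ⟨0, by omega⟩ 0 (by linarith))
  -- For `Rω = 0` both quotients bounding `τ` would have the junk value `0`.
  have hRpos : 0 < Rω := by
    rcases hR0.lt_or_eq with h | h
    · exact h
    · rw [← h] at hH3
      simp only [mul_zero, div_zero, min_self] at hH3
      linarith
  obtain ⟨hτ1, hτ2⟩ := lt_min_iff.1 hH3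
  rw [lt_div_iff₀ (by positivity)] at hτ1
  rw [lt_div_iff₀ hRpos, hDstar] at hτ2
  have hRτ : 0 ≤ Rω * τ := by positivity
  have hODE0 : ∀ i, deriv (θ i) 0 = Ω i + (κ / (N : ℝ)) *
      ∑ k ∈ Finset.univ.erase i, Real.sin (θ k (-τ) - θ i 0) := by
    intro i
    have hcont : ∀ k, Continuous (θ k) := fun k => (hC1 k).continuous
    have h : EqOn (deriv (θ i)) (fun t => Ω i + (κ / (N : ℝ)) *
        ∑ k ∈ Finset.univ.erase i, Real.sin (θ k (t - τ) - θ i t)) (closure (Ioi 0)) :=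
      EqOn.closure (fun t ht => hODE i t ht) ((hC1 i).continuous_deriv le_rfl) (by fun_prop)
    simpa using h (x := 0) (by simp)
  have hN0 : (0 : ℝ) < N := by linarith
  have hsin : 0 < sin (Dθ0 / 2) := sin_pos_of_pos_of_lt_pi (by linarith) (by linarith)
  constructor
  · refine diniUpper_diam_le (fun i => (hC1 i).differentiable (by norm_num) 0) fun i j hij => ?_
    rw [← hDθ0] at hij
    have hle : ∀ k l, θ k 0 - θ l 0 ≤ Dθ0 := fun k l => by
      rw [hDθ0]
      exact (le_abs_self _).trans (abs_sub_le_diam (fun i => θ i 0) k l)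
    have hne : i ≠ j := by
      rintro rfl
      linarith
    have hc := coupling_diff_le (a := fun k => θ k (-τ)) (b := fun k => θ k 0) (r := Rω * τ) i j hne
      (fun k => delay_le (hC1 k) hτ (hderiv k)) (fun k => by linarith [hle i k])
      (fun k => by linarith [hle k j]) (by rw [hij]; linarith) (by rw [hij]; linarith)
      (by rw [hij]; linarith)
    have hΩ : Ω i - Ω j ≤ DΩ := by
      rw [hDΩ]
      exact (le_abs_self _).trans (abs_sub_le_diam Ω i j)
    simp only [hij] at hc
    have hm := mul_le_mul_of_nonneg_left hc (show 0 ≤ κ / (N : ℝ) by positivity)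
    rw [hODE0 i, hODE0 j]
    have e : 2 * κ * (((N : ℝ) - 2) / N) * sin (Dθ0 / 2) * cos (Dθ0 / 2 + Rω * τ) =
        κ / N * (((N : ℝ) - 2) * (2 * sin (Dθ0 / 2) * cos (Dθ0 / 2 + Rω * τ))) := by ring
    rw [e]
    linarith
  · have hcos : cos ((Dθ0 + δ) / 2) ≤ cos (Dθ0 / 2 + Rω * τ) :=
      cos_le_cos_of_nonneg_of_le_pi (by linarith) (by linarith) (by linarith)
    have hcpos : 0 < cos ((Dθ0 + δ) / 2) :=
      cos_pos_of_mem_Ioo ⟨by linarith, by linarith⟩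
    have hN2 : (0 : ℝ) < N - 2 := by linarith
    rw [gt_iff_lt, div_lt_iff₀ (by positivity), div_mul_eq_mul_div, div_lt_iff₀ hN2] at hH2
    have e : 2 * κ * (((N : ℝ) - 2) / N) * sin (Dθ0 / 2) * cos (Dθ0 / 2 + Rω * τ) =
        (κ * (2 * sin (Dθ0 / 2) * cos (Dθ0 / 2 + Rω * τ)) * (N - 2)) / N := by ring
    rw [e, sub_neg, lt_div_iff₀ hN0, mul_comm]
    refine hH2.trans_le ?_
    gcongr
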